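/- For the elephant random walk with memory parameter p ∈ [0, 1) on a Cayley graph that is the d-regular tree T_d (d ≥ 3), if p ≤ p_d = (d + 1)/(2d) and m > 2, then there exists a constant C > 0 such that E|Ξ_n|^m ≤ C · n^{−1} for all n ≥ 1. -/

import Mathlib

open MeasureTheory ProbabilityTheory Filter

noncomputable section

/-- The Cayley graph of a group with respect to a finite set of generators. -/
def cayleyGraph {G : Type*} [Group G] (S : Finset G) : SimpleGraph G where
  Adj x y := x ≠ y ∧ (y * x⁻¹ ∈ S ∨ x * y⁻¹ ∈ S)
  symm := by
    constructor
    rintro x y ⟨h1, h2⟩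
    refine ⟨h1.symm, ?_⟩
    rcases h2 with h | h
    · exact Or.inr h
    · exact Or.inl h
  loopless := ⟨fun x h => h.1 rfl⟩

/-- The elephant random walk (ERW) with memory parameter `p` on the Cayley graph of a
group `G` with respect to a symmetric generating set `S` of cardinality `d`, not
containing the identity, whose Cayley graph is a tree (hence the `d`-regular tree
`T_d`).  The steps are `g 1, g 2, …` (the value of `g 0` is irrelevant).  The law of
the process is characterised by: `g 1` is uniform on `S`, and, conditionally on the
first `n` steps being `s 1, …, s n`, the next step `g (n+1)` equals `a ∈ S` with
probability `p * N/n + ((1-p)/(d-1)) * (n-N)/n`, where `N = #{1 ≤ k ≤ n : s k = a}`;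
this is precisely the probability that the walker, recalling a uniform past epoch
`D ∈ {1, …, n}`, repeats `g D` with probability `p` and takes any given other step
with probability `(1-p)/(d-1)`. -/
structure ERW (G : Type*) [Group G] [DecidableEq G] (d : ℕ) (p : ℝ)
    (Ω : Type*) [MeasurableSpace Ω] (P : Measure Ω) where
  S : Finset G
  card_S : S.card = d
  symm_S : ∀ s ∈ S, s⁻¹ ∈ S
  one_not_mem : (1 : G) ∉ S
  tree : (cayleyGraph S).IsTree
  g : ℕ → Ω → G
  meas_g : ∀ n a, MeasurableSet {ω | g n ω = a}
  mem_S : ∀ n, 1 ≤ n → ∀ ω, g n ω ∈ S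
  init : ∀ a ∈ S, (P {ω | g 1 ω = a}).toReal = 1 / d
  update : ∀ n, 1 ≤ n → ∀ s : ℕ → G, ∀ a ∈ S,
    (P ({ω | ∀ k ∈ Finset.Icc 1 n, g k ω = s k} ∩ {ω | g (n + 1) ω = a})).toReal
      = (p * ((((Finset.Icc 1 n).filter fun k => s k = a).card : ℝ) / n)
          + (1 - p) / ((d : ℝ) - 1)
            * (((n : ℝ) - (((Finset.Icc 1 n).filter fun k => s k = a).card : ℝ)) / n))
        * (P {ω | ∀ k ∈ Finset.Icc 1 n, g k ω = s k}).toReal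

namespace ERW

variable {G : Type*} [Group G] [DecidableEq G] {d : ℕ} {p : ℝ}
  {Ω : Type*} [MeasurableSpace Ω] {P : Measure Ω}

/-- The position `w n = g n ⋯ g 1` of the walk at time `n`. -/
def pos (E : ERW G d p Ω P) : ℕ → Ω → G
  | 0 => fun _ => 1
  | n + 1 => fun ω => E.g (n + 1) ω * E.pos n ω

/-- `Δ n`: the (word-metric) distance of the walker from the root at time `n`. -/
def dist (E : ERW G d p Ω P) (n : ℕ) (ω : Ω) : ℕ :=
  (cayleyGraph E.S).dist 1 (E.pos n ω)

/-- `N n a`: the number of `a`-steps taken by time `n`. -/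
def count (E : ERW G d p Ω P) (a : G) (n : ℕ) (ω : Ω) : ℕ :=
  ((Finset.Icc 1 n).filter fun k => E.g k ω = a).card

/-- `γ n`: the unique step decreasing the distance to the root by 1
(a junk value if the walker is at the root). -/
def gammaStep (E : ERW G d p Ω P) (n : ℕ) (ω : Ω) : G :=
  @Classical.epsilon G ⟨1⟩ fun s =>
    s ∈ E.S ∧ (cayleyGraph E.S).dist 1 (s * E.pos n ω) + 1 = E.dist n ω

/-- `ℓ n = N n (γ n)` if the walker is away from the root, and `0` otherwise. -/
def ell (E : ERW G d p Ω P) (n : ℕ) (ω : Ω) : ℕ :=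
  if E.pos n ω = 1 then 0 else E.count (E.gammaStep n ω) n ω

/-- `Ξ n = (1/n) ∑_{k=0}^{n-1} (ℓ k / k - 1(Δ k > 0)/d)` (with the convention
`ℓ 0 / 0 = 0`, automatic since division by zero yields zero). -/
def Xi (E : ERW G d p Ω P) (n : ℕ) (ω : Ω) : ℝ :=
  (1 / n) * ∑ k ∈ Finset.range n,
    ((E.ell k ω : ℝ) / k - (if 0 < E.dist k ω then 1 else 0) / d)

/-- The natural filtration `F n` generated by the steps up to time `n`. -/
def filt (E : ERW G d p Ω P) (n : ℕ) : MeasurableSpace Ω :=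
  ⨆ k ∈ Finset.Icc 1 n, MeasurableSpace.comap (E.g k) ⊤

/-- `G n = E[Δ (n+1) - Δ n | F n]`. -/
def drift (E : ERW G d p Ω P) (n : ℕ) : Ω → ℝ :=
  P[fun ω => ((E.dist (n + 1) ω : ℝ) - (E.dist n ω : ℝ)) | E.filt n]

/-- The martingale differences `Y k = Δ k - Δ (k-1) - G (k-1)`. -/
def mdiff (E : ERW G d p Ω P) (k : ℕ) (ω : Ω) : ℝ :=
  (E.dist k ω : ℝ) - (E.dist (k - 1) ω : ℝ) - E.drift (k - 1) ω

/-- The martingale `M n = ∑_{k=1}^n Y k`. -/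
def mart (E : ERW G d p Ω P) (n : ℕ) (ω : Ω) : ℝ :=
  ∑ k ∈ Finset.Icc 1 n, E.mdiff k ω

end ERW

/-- The rate `r n`: `√n` in the subcritical regime `p < p_d = (d+1)/(2d)`,
`√(n / log n)` in the critical regime `p = p_d`, and `n ^ (d(1-p)/(d-1))` in the
supercritical regime `p > p_d`. -/
def rate (p : ℝ) (d : ℕ) (n : ℕ) : ℝ :=
  if p < ((d : ℝ) + 1) / (2 * d) then Real.sqrt n
  else if p = ((d : ℝ) + 1) / (2 * d) then Real.sqrt ((n : ℝ) / Real.log n)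
  else (n : ℝ) ^ ((d : ℝ) * (1 - p) / ((d : ℝ) - 1))



namespace ERW

variable {G : Type*} [Group G] [DecidableEq G] {d : ℕ} {p : ℝ}
  {Ω : Type*} [MeasurableSpace Ω] {P : Measure Ω}

lemma gammaStep_mem (E : ERW G d p Ω P) (n : ℕ) (ω : Ω) (h : E.pos n ω ≠ 1) :
    E.gammaStep n ω ∈ E.S := by
  have hex : ∃ s, s ∈ E.S ∧ (cayleyGraph E.S).dist 1 (s * E.pos n ω) + 1 = E.dist n ω := by
    have hc := E.tree.connected
    obtain ⟨w, hw⟩ := (hc.preconnected (E.pos n ω) 1).exists_walk_length_eq_dist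
    generalize hx : E.pos n ω = x at *
    rw [ERW.dist, hx]
    generalize hone : (1 : G) = o at *
    cases w with
    | nil => exact absurd rfl h
    | @cons _ y _ hadj t =>
      refine ⟨y * x⁻¹, ?_, ?_⟩
      · rcases hadj.2 with h2 | h2
        · exact h2
        · have := E.symm_S _ h2
          simpa using this
      · have h1 : (cayleyGraph E.S).dist y o ≤ t.length := SimpleGraph.dist_le t
        have h2 : (cayleyGraph E.S).dist x o ≤
            (cayleyGraph E.S).dist x y + (cayleyGraph E.S).dist y o :=
          hc.dist_triangle
        have h3 : (cayleyGraph E.S).dist x y = 1 :=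
          SimpleGraph.dist_eq_one_iff_adj.2 hadj
        have h4 : y * x⁻¹ * x = y := by group
        rw [h4, SimpleGraph.dist_comm (u := o) (v := y),
          SimpleGraph.dist_comm (u := o) (v := x)]
        simp only [SimpleGraph.Walk.length_cons] at hw
        omega
  exact (@Classical.epsilon_spec_aux G ⟨1⟩ (fun s => s ∈ E.S ∧
    (cayleyGraph E.S).dist 1 (s * E.pos n ω) + 1 = E.dist n ω) hex).1

/-- The centred empirical frequency of the step `a`. -/
def X (E : ERW G d p Ω P) (a : G) (n : ℕ) (ω : Ω) : ℝ := (E.count a n ω : ℝ) / n - 1 / d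

lemma count_le (E : ERW G d p Ω P) (a : G) (n : ℕ) (ω : Ω) : E.count a n ω ≤ n := by
  unfold count
  refine (Finset.card_filter_le _ _).trans ?_
  simp

lemma abs_X_le (E : ERW G d p Ω P) (hd : 3 ≤ d) (a : G) (n : ℕ) (ω : Ω) :
    |E.X a n ω| ≤ 1 := by
  unfold X
  have h1 : (E.count a n ω : ℝ) / n ≤ 1 :=
    div_le_one_of_le₀ (by exact_mod_cast E.count_le a n ω) (by positivity)
  have h2 : 0 ≤ (E.count a n ω : ℝ) / n := by positivity
  have h3 : (1 : ℝ) / d ≤ 1 := by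
    apply div_le_one_of_le₀ _ (by positivity)
    exact_mod_cast (by omega : 1 ≤ d)
  have h4 : (0 : ℝ) ≤ 1 / d := by positivity
  rw [abs_le]; constructor <;> linarith

lemma term_le (E : ERW G d p Ω P) (k : ℕ) (ω : Ω) {m : ℝ} (hm : 0 < m) :
    |(E.ell k ω : ℝ) / k - (if 0 < E.dist k ω then 1 else 0) / d| ^ m
      ≤ ∑ a ∈ E.S, |E.X a k ω| ^ m := by
  by_cases h : E.pos k ω = 1
  · have : E.dist k ω = 0 := by simp [ERW.dist, h]
    simp only [ell, h, this]
    simp [Real.zero_rpow hm.ne']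
    exact Finset.sum_nonneg fun a _ => by positivity
  · have hpos : 0 < E.dist k ω :=
      E.tree.connected.pos_dist_of_ne (fun hh => h hh.symm)
    simp only [ell, h, hpos, if_true, if_false]
    exact Finset.single_le_sum (f := fun a => |E.X a k ω| ^ m)
      (fun a _ => by positivity) (E.gammaStep_mem k ω h)

lemma Xi_le (E : ERW G d p Ω P) (n : ℕ) (hn : 1 ≤ n) (ω : Ω) {m : ℝ} (hm : 1 ≤ m) :
    |E.Xi n ω| ^ m ≤ (1 / n) * ∑ k ∈ Finset.range n, ∑ a ∈ E.S, |E.X a k ω| ^ m := by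
  have hn' : (0 : ℝ) < n := by exact_mod_cast hn
  set x : ℕ → ℝ := fun k => (E.ell k ω : ℝ) / k - (if 0 < E.dist k ω then 1 else 0) / d with hx
  have h1 : |E.Xi n ω| ≤ ∑ k ∈ Finset.range n, (1 / n : ℝ) * |x k| := by
    unfold Xi
    rw [abs_mul, ← Finset.mul_sum, abs_of_nonneg (by positivity : (0 : ℝ) ≤ 1 / n)]
    gcongr
    exact Finset.abs_sum_le_sum_abs _ _
  have h2 := Real.rpow_arith_mean_le_arith_mean_rpow (Finset.range n) (fun _ => (1 / n : ℝ))
    (fun k => |x k|) (fun _ _ => by positivity) (by simp; field_simp)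
    (fun _ _ => abs_nonneg _) hm
  refine (Real.rpow_le_rpow (abs_nonneg _) h1 (by linarith)).trans (h2.trans ?_)
  rw [← Finset.mul_sum]
  gcongr with k hk
  exact E.term_le k ω (by linarith)

lemma count_succ (E : ERW G d p Ω P) (a : G) (n : ℕ) (ω : Ω) :
    E.count a (n + 1) ω = E.count a n ω + if E.g (n + 1) ω = a then 1 else 0 := by
  unfold count
  rw [← Finset.insert_Icc_right_eq_Icc_add_one (by omega : 1 ≤ n + 1), Finset.filter_insert]
  split_ifs with h
  · rw [Finset.card_insert_of_notMem (by simp)]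
  · simp

lemma measurable_count (E : ERW G d p Ω P) (a : G) (n : ℕ) : Measurable (E.count a n) := by
  induction n with
  | zero =>
    have : E.count a 0 = fun _ => 0 := by ext ω; simp [count]
    rw [this]; exact measurable_const
  | succ n ih =>
    have : E.count a (n + 1) = fun ω => E.count a n ω + if E.g (n + 1) ω = a then 1 else 0 := by
      ext ω; exact E.count_succ a n ω
    rw [this]
    exact ih.add (Measurable.ite (E.meas_g (n + 1) a) measurable_const measurable_const)

/-- Cylinder sets. -/
def cyl (E : ERW G d p Ω P) (n : ℕ) (s : ℕ → G) : Set Ω :=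
  {ω | ∀ k ∈ Finset.Icc 1 n, E.g k ω = s k}

lemma meas_cyl (E : ERW G d p Ω P) (n : ℕ) (s : ℕ → G) : MeasurableSet (E.cyl n s) := by
  have : E.cyl n s = ⋂ k ∈ Finset.Icc 1 n, {ω | E.g k ω = s k} := by
    ext ω; simp [cyl]
  rw [this]
  exact Finset.measurableSet_biInter _ fun k _ => E.meas_g k _

/-- Extension of a finite history. -/
def extend (E : ERW G d p Ω P) (n : ℕ) (s : Finset.Icc 1 n → E.S) : ℕ → G :=
  fun k => if h : k ∈ Finset.Icc 1 n then (s ⟨k, h⟩ : G) else 1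

lemma decomp [IsProbabilityMeasure P] (E : ERW G d p Ω P) (n : ℕ) (A : Set Ω)
    (hA : MeasurableSet A) :
    P.real A = ∑ s : Finset.Icc 1 n → E.S, P.real (A ∩ E.cyl n (E.extend n s)) := by
  rw [← measureReal_iUnion_fintype]
  · congr 1
    ext ω
    simp only [Set.mem_iUnion, Set.mem_inter_iff, exists_and_left, iff_self_and]
    intro _
    refine ⟨fun k => ⟨E.g k ω, E.mem_S k (Finset.mem_Icc.1 k.2).1 ω⟩, ?_⟩
    intro k hk
    simp only [extend, hk, dif_pos]
  · intro s t hst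
    rw [Function.onFun, Set.disjoint_left]
    rintro ω ⟨_, h1⟩ ⟨_, h2⟩
    apply hst
    funext k
    have e1 := h1 k k.2
    have e2 := h2 k k.2
    simp only [extend, k.2, dif_pos] at e1 e2
    exact Subtype.ext (e1.symm.trans e2)
  · intro s
    exact hA.inter (E.meas_cyl n _)

lemma count_of_mem_cyl (E : ERW G d p Ω P) {n : ℕ} {s : ℕ → G} {ω : Ω} (h : ω ∈ E.cyl n s)
    (a : G) : E.count a n ω = ((Finset.Icc 1 n).filter fun k => s k = a).card := by
  unfold count
  congr 1
  apply Finset.filter_congr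
  intro k hk
  rw [h k hk]

lemma cond_prob [IsProbabilityMeasure P] (E : ERW G d p Ω P) {n : ℕ} (hn : 1 ≤ n)
    {a : G} (ha : a ∈ E.S) (j : ℕ) :
    P.real ({ω | E.count a n ω = j} ∩ {ω | E.g (n + 1) ω = a})
      = (p * ((j : ℝ) / n) + (1 - p) / ((d : ℝ) - 1) * (((n : ℝ) - j) / n))
        * P.real {ω | E.count a n ω = j} := by
  have hm : MeasurableSet {ω | E.count a n ω = j} :=
    E.measurable_count a n (measurableSet_singleton j)
  rw [E.decomp n _ (hm.inter (E.meas_g (n + 1) a)), E.decomp n _ hm, Finset.mul_sum]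
  refine Finset.sum_congr rfl fun s _ => ?_
  set t := E.extend n s
  by_cases hj : ((Finset.Icc 1 n).filter fun k => t k = a).card = j
  · have h1 : {ω | E.count a n ω = j} ∩ {ω | E.g (n + 1) ω = a} ∩ E.cyl n t
        = E.cyl n t ∩ {ω | E.g (n + 1) ω = a} := by
      ext ω
      constructor
      · rintro ⟨⟨_, h⟩, h'⟩; exact ⟨h', h⟩
      · rintro ⟨h', h⟩; exact ⟨⟨(E.count_of_mem_cyl h' a).trans hj, h⟩, h'⟩
    have h2 : {ω | E.count a n ω = j} ∩ E.cyl n t = E.cyl n t := by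
      apply Set.inter_eq_right.2
      intro ω h'
      exact (E.count_of_mem_cyl h' a).trans hj
    rw [h1, h2]
    have := E.update n hn t a ha
    rw [hj] at this
    exact this
  · have h2 : {ω | E.count a n ω = j} ∩ E.cyl n t = ∅ := by
      ext ω
      simp only [Set.mem_inter_iff, Set.mem_setOf_eq, Set.mem_empty_iff_false, iff_false]
      rintro ⟨h, h'⟩
      exact hj ((E.count_of_mem_cyl h' a).symm.trans h)
    have h1 : {ω | E.count a n ω = j} ∩ {ω | E.g (n + 1) ω = a} ∩ E.cyl n t = ∅ := by
      rw [Set.inter_right_comm, h2, Set.empty_inter]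
    rw [h1, h2]; simp

/-- The indicator that step `n + 1` is `a`. -/
def ind (E : ERW G d p Ω P) (a : G) (n : ℕ) (ω : Ω) : ℝ :=
  if E.g (n + 1) ω = a then 1 else 0

lemma measurable_ind (E : ERW G d p Ω P) (a : G) (n : ℕ) : Measurable (E.ind a n) :=
  Measurable.ite (E.meas_g (n + 1) a) measurable_const measurable_const

lemma integrable_fn [IsProbabilityMeasure P] (E : ERW G d p Ω P) (a : G) (n : ℕ)
    (φ : ℕ → ℝ → ℝ) :
    Integrable (fun ω => φ (E.count a n ω) (E.ind a n ω)) P := by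
  have hmeas : Measurable (fun ω => φ (E.count a n ω) (E.ind a n ω)) := by
    have : (fun ω => φ (E.count a n ω) (E.ind a n ω)) =
        fun ω => if E.g (n + 1) ω = a then φ (E.count a n ω) 1 else φ (E.count a n ω) 0 := by
      ext ω; unfold ind; split_ifs <;> rfl
    rw [this]
    exact Measurable.ite (E.meas_g (n + 1) a)
      ((measurable_from_nat (f := fun j => φ j 1)).comp (E.measurable_count a n))
      ((measurable_from_nat (f := fun j => φ j 0)).comp (E.measurable_count a n))
  refine Integrable.of_bound hmeas.aestronglyMeasurable
    (∑ j ∈ Finset.range (n + 1), (|φ j 0| + |φ j 1|)) (Eventually.of_forall fun ω => ?_)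
  have hle : |φ (E.count a n ω) 0| + |φ (E.count a n ω) 1| ≤
      ∑ j ∈ Finset.range (n + 1), (|φ j 0| + |φ j 1|) :=
    Finset.single_le_sum (f := fun j => |φ j 0| + |φ j 1|) (fun _ _ => by positivity)
      (Finset.mem_range.2 (Nat.lt_succ_of_le (E.count_le a n ω)))
  refine le_trans ?_ hle
  rw [Real.norm_eq_abs]
  unfold ind
  split_ifs
  · linarith [abs_nonneg (φ (E.count a n ω) 0)]
  · linarith [abs_nonneg (φ (E.count a n ω) 1)]

lemma cond_exp [IsProbabilityMeasure P] (E : ERW G d p Ω P) {n : ℕ} (hn : 1 ≤ n)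
    {a : G} (ha : a ∈ E.S) (φ : ℕ → ℝ) :
    ∫ ω, φ (E.count a n ω) * E.ind a n ω ∂P
      = ∫ ω, φ (E.count a n ω) * (p * ((E.count a n ω : ℝ) / n)
        + (1 - p) / ((d : ℝ) - 1) * (((n : ℝ) - E.count a n ω) / n)) ∂P := by
  have hm : ∀ j, MeasurableSet {ω | E.count a n ω = j} := fun j =>
    E.measurable_count a n (measurableSet_singleton j)
  have key : ∀ ψ : ℕ → ℝ, ∀ ω, ψ (E.count a n ω) = ∑ j ∈ Finset.range (n + 1),
      Set.indicator {ω | E.count a n ω = j} (fun _ => ψ j) ω := by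
    intro ψ ω
    rw [Finset.sum_eq_single (E.count a n ω)]
    · simp
    · intro j _ hj
      simp [Set.indicator, hj.symm]
    · intro h
      exact absurd (Finset.mem_range.2 (Nat.lt_succ_of_le (E.count_le a n ω))) h
  have key2 : ∀ ω, φ (E.count a n ω) * E.ind a n ω = ∑ j ∈ Finset.range (n + 1),
      Set.indicator ({ω | E.count a n ω = j} ∩ {ω | E.g (n + 1) ω = a}) (fun _ => φ j) ω := by
    intro ω
    rw [key φ ω, Finset.sum_mul]
    refine Finset.sum_congr rfl fun j _ => ?_
    by_cases h1 : E.count a n ω = j <;> by_cases h2 : E.g (n + 1) ω = a <;>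
      simp [Set.indicator, ind, h1, h2]
  simp_rw [key2]
  have e2 := key (fun c => φ c * (p * ((c : ℝ) / n)
        + (1 - p) / ((d : ℝ) - 1) * (((n : ℝ) - c) / n)))
  simp only [e2]
  rw [integral_finsetSum, integral_finsetSum]
  · refine Finset.sum_congr rfl fun j _ => ?_
    rw [integral_indicator_const _ ((hm j).inter (E.meas_g _ _)), integral_indicator_const _ (hm j),
      E.cond_prob hn ha]
    simp only [smul_eq_mul]; ring
  · intro j _
    exact (integrable_const _).indicator (hm j)
  · intro j _
    exact (integrable_const _).indicator ((hm j).inter (E.meas_g _ _))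

/-- The centred count. -/
def Z (E : ERW G d p Ω P) (a : G) (n : ℕ) (ω : Ω) : ℝ := (E.count a n ω : ℝ) - n / d

lemma Z_succ (E : ERW G d p Ω P) (a : G) (n : ℕ) (ω : Ω) :
    E.Z a (n + 1) ω = E.Z a n ω + (E.ind a n ω - 1 / d) := by
  unfold Z ind
  rw [E.count_succ]
  push_cast
  ring

lemma cond_Z [IsProbabilityMeasure P] (E : ERW G d p Ω P) (hd : 3 ≤ d) {n : ℕ} (hn : 1 ≤ n)
    {a : G} (ha : a ∈ E.S) (φ : ℝ → ℝ) :
    ∫ ω, φ (E.Z a n ω) * (E.ind a n ω - 1 / d) ∂P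
      = ((p * d - 1) / (d - 1)) / n * ∫ ω, φ (E.Z a n ω) * E.Z a n ω ∂P := by
  have h := E.cond_exp hn ha (fun c => φ ((c : ℝ) - n / d))
  have i1 := E.integrable_fn a n (fun c x => φ ((c : ℝ) - n / d) * x)
  have i2 := E.integrable_fn a n (fun c _ => φ ((c : ℝ) - n / d) * (1 / d))
  have i3 := E.integrable_fn a n (fun c x => φ ((c : ℝ) - n / d) * (p * ((c : ℝ) / n)
        + (1 - p) / ((d : ℝ) - 1) * (((n : ℝ) - c) / n)))
  have hd' : (3 : ℝ) ≤ d := by exact_mod_cast hd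
  have hn' : (1 : ℝ) ≤ n := by exact_mod_cast hn
  have hd1 : (d : ℝ) - 1 ≠ 0 := by linarith
  have hd0 : (d : ℝ) ≠ 0 := by linarith
  have hn0 : (n : ℝ) ≠ 0 := by linarith
  rw [← integral_const_mul]
  simp_rw [mul_sub]
  unfold Z
  rw [integral_sub i1 i2, h, ← integral_sub i3 i2]
  congr 1
  ext ω
  field_simp
  ring

lemma alpha_bounds (hd : 3 ≤ d) (hp0 : 0 ≤ p) (hpd : p ≤ ((d : ℝ) + 1) / (2 * d)) :
    (p * d - 1) / ((d : ℝ) - 1) ≤ 1 / 2 := by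
  have hd' : (3 : ℝ) ≤ d := by exact_mod_cast hd
  rw [le_div_iff₀ (by linarith)] at hpd
  rw [div_le_div_iff₀ (by linarith) (by norm_num)]
  linarith

lemma xi_bound (E : ERW G d p Ω P) (hd : 3 ≤ d) (a : G) (n : ℕ) (ω : Ω) :
    |E.ind a n ω - 1 / d| ≤ 1 := by
  have h3 : (1 : ℝ) / d ≤ 1 := by
    apply div_le_one_of_le₀ _ (by positivity)
    exact_mod_cast (by omega : 1 ≤ d)
  have h4 : (0 : ℝ) ≤ 1 / d := by positivity
  unfold ind
  rw [abs_le]; split_ifs <;> constructor <;> linarith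

lemma second_step [IsProbabilityMeasure P] (E : ERW G d p Ω P) (hd : 3 ≤ d) (hp0 : 0 ≤ p)
    (hpd : p ≤ ((d : ℝ) + 1) / (2 * d)) {n : ℕ} (hn : 1 ≤ n) {a : G} (ha : a ∈ E.S) :
    ∫ ω, E.Z a (n + 1) ω ^ 2 ∂P ≤ (1 + 1 / n) * ∫ ω, E.Z a n ω ^ 2 ∂P + 1 := by
  have hα := alpha_bounds hd hp0 hpd
  have hn' : (1 : ℝ) ≤ n := by exact_mod_cast hn
  have hc := E.cond_Z hd hn ha (fun z => z)
  have i1 : Integrable (fun ω => E.Z a n ω ^ 2) P :=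
    E.integrable_fn a n (fun c _ => ((c : ℝ) - n / d) ^ 2)
  have i2 : Integrable (fun ω => E.Z a n ω * (E.ind a n ω - 1 / d)) P :=
    E.integrable_fn a n (fun c x => ((c : ℝ) - n / d) * (x - 1 / d))
  have i0 : Integrable (fun ω => E.Z a (n + 1) ω ^ 2) P :=
    E.integrable_fn a (n + 1) (fun c _ => ((c : ℝ) - (n + 1 : ℕ) / d) ^ 2)
  have h1 : ∫ ω, E.Z a (n + 1) ω ^ 2 ∂P ≤
      ∫ ω, (E.Z a n ω ^ 2 + 2 * (E.Z a n ω * (E.ind a n ω - 1 / d)) + 1) ∂P := by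
    refine integral_mono i0 ((i1.add (i2.const_mul 2)).add (integrable_const _)) fun ω => ?_
    have := abs_le.1 (E.xi_bound hd a n ω)
    simp only [E.Z_succ]
    nlinarith [this.1, this.2]
  have j1 : Integrable (fun ω => E.Z a n ω ^ 2 + 2 * (E.Z a n ω * (E.ind a n ω - 1 / d))) P :=
    i1.add (i2.const_mul 2)
  rw [integral_add j1 (integrable_const _),
    integral_add i1 (i2.const_mul 2), integral_const_mul, hc] at h1
  simp only [integral_const, probReal_univ, smul_eq_mul, mul_one, ← pow_two] at h1
  have hA : 0 ≤ ∫ ω, E.Z a n ω ^ 2 ∂P := integral_nonneg fun ω => by positivity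
  have h2 : (p * d - 1) / ((d : ℝ) - 1) / n ≤ 1 / 2 / n := by gcongr
  have h3 := mul_le_mul_of_nonneg_right h2 hA
  have h4 : (1 : ℝ) / 2 / n = 1 / n / 2 := by ring
  rw [h4] at h3
  linarith

lemma fourth_step [IsProbabilityMeasure P] (E : ERW G d p Ω P) (hd : 3 ≤ d) (hp0 : 0 ≤ p)
    (hpd : p ≤ ((d : ℝ) + 1) / (2 * d)) {n : ℕ} (hn : 1 ≤ n) {a : G} (ha : a ∈ E.S) :
    ∫ ω, E.Z a (n + 1) ω ^ 4 ∂P ≤ (1 + 2 / n) * ∫ ω, E.Z a n ω ^ 4 ∂P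
      + 8 * ∫ ω, E.Z a n ω ^ 2 ∂P + 3 := by
  have hα := alpha_bounds hd hp0 hpd
  have hn' : (1 : ℝ) ≤ n := by exact_mod_cast hn
  have hc := E.cond_Z hd hn ha (fun z => z ^ 3)
  have i1 : Integrable (fun ω => E.Z a n ω ^ 4) P :=
    E.integrable_fn a n (fun c _ => ((c : ℝ) - n / d) ^ 4)
  have i2 : Integrable (fun ω => E.Z a n ω ^ 3 * (E.ind a n ω - 1 / d)) P :=
    E.integrable_fn a n (fun c x => ((c : ℝ) - n / d) ^ 3 * (x - 1 / d))
  have i3 : Integrable (fun ω => E.Z a n ω ^ 2) P :=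
    E.integrable_fn a n (fun c _ => ((c : ℝ) - n / d) ^ 2)
  have i0 : Integrable (fun ω => E.Z a (n + 1) ω ^ 4) P :=
    E.integrable_fn a (n + 1) (fun c _ => ((c : ℝ) - (n + 1 : ℕ) / d) ^ 4)
  have h1 : ∫ ω, E.Z a (n + 1) ω ^ 4 ∂P ≤
      ∫ ω, (E.Z a n ω ^ 4 + 4 * (E.Z a n ω ^ 3 * (E.ind a n ω - 1 / d))
        + 8 * E.Z a n ω ^ 2 + 3) ∂P := by
    refine integral_mono i0 (((i1.add (i2.const_mul 4)).add (i3.const_mul 8)).add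
      (integrable_const _)) fun ω => ?_
    have hx := E.xi_bound hd a n ω
    simp only [E.Z_succ]
    generalize E.ind a n ω - 1 / (d : ℝ) = x at hx
    generalize E.Z a n ω = z
    have hx2 : x ^ 2 ≤ 1 := by rw [← sq_abs]; nlinarith [abs_nonneg x]
    have hx4 : x ^ 4 ≤ 1 := by nlinarith [sq_nonneg x]
    have hzx : z ^ 2 * x ^ 2 ≤ z ^ 2 := by nlinarith [sq_nonneg z]
    have hzx3 : 4 * (z * x ^ 3) ≤ 2 * z ^ 2 + 2 := by
      nlinarith [sq_nonneg (z * x - x ^ 2)]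
    nlinarith
  have j1 : Integrable (fun ω => E.Z a n ω ^ 4
      + 4 * (E.Z a n ω ^ 3 * (E.ind a n ω - 1 / d))) P := i1.add (i2.const_mul 4)
  have j2 : Integrable (fun ω => E.Z a n ω ^ 4
      + 4 * (E.Z a n ω ^ 3 * (E.ind a n ω - 1 / d)) + 8 * E.Z a n ω ^ 2) P :=
    j1.add (i3.const_mul 8)
  rw [integral_add j2 (integrable_const _),
    integral_add j1 (i3.const_mul 8),
    integral_add i1 (i2.const_mul 4), integral_const_mul, integral_const_mul, hc] at h1
  simp only [integral_const, probReal_univ, smul_eq_mul, mul_one, ← pow_succ] at h1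
  have hA : 0 ≤ ∫ ω, E.Z a n ω ^ 4 ∂P := integral_nonneg fun ω => by positivity
  have h2 : (p * d - 1) / ((d : ℝ) - 1) / n ≤ 1 / 2 / n := by gcongr
  have h3 := mul_le_mul_of_nonneg_right h2 hA
  have h4 : (1 : ℝ) / 2 / n = 2 / n / 4 := by ring
  rw [h4] at h3
  norm_num at h1 h3 ⊢
  linarith

lemma abs_Z_one (E : ERW G d p Ω P) (hd : 3 ≤ d) (a : G) (ω : Ω) : |E.Z a 1 ω| ≤ 1 := by
  have := E.abs_X_le hd a 1 ω
  simpa [X, Z] using this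

lemma moments [IsProbabilityMeasure P] (E : ERW G d p Ω P) (hd : 3 ≤ d) (hp0 : 0 ≤ p)
    (hpd : p ≤ ((d : ℝ) + 1) / (2 * d)) {n : ℕ} (hn : 1 ≤ n) {a : G} (ha : a ∈ E.S) :
    ∫ ω, E.Z a n ω ^ 2 ∂P ≤ n * (harmonic n : ℝ) ∧
    ∫ ω, E.Z a n ω ^ 4 ∂P ≤ 4 * n ^ 2 * (harmonic n : ℝ) ^ 2 := by
  induction n, hn using Nat.le_induction with
  | base =>
    have hz : ∀ ω, E.Z a 1 ω ^ 2 ≤ 1 := fun ω => by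
      rw [← sq_abs]; nlinarith [abs_nonneg (E.Z a 1 ω), E.abs_Z_one hd a ω]
    have h2 : ∫ ω, E.Z a 1 ω ^ 2 ∂P ≤ ∫ ω, (1 : ℝ) ∂P :=
      integral_mono (E.integrable_fn a 1 (fun c _ => ((c : ℝ) - (1 : ℕ) / d) ^ 2))
        (integrable_const _) hz
    have h4 : ∫ ω, E.Z a 1 ω ^ 4 ∂P ≤ ∫ ω, (1 : ℝ) ∂P :=
      integral_mono (E.integrable_fn a 1 (fun c _ => ((c : ℝ) - (1 : ℕ) / d) ^ 4))
        (integrable_const _) (fun ω => by nlinarith [hz ω, sq_nonneg (E.Z a 1 ω)])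
    have hh : harmonic 1 = 1 := by simp [harmonic]
    rw [hh]
    simp at h2 h4 ⊢
    constructor <;> linarith
  | succ n hn ih =>
    obtain ⟨ih2, ih4⟩ := ih
    have s2 := E.second_step hd hp0 hpd hn ha
    have s4 := E.fourth_step hd hp0 hpd hn ha
    have hn' : (1 : ℝ) ≤ n := by exact_mod_cast hn
    have hh0 : (0 : ℝ) ≤ (harmonic n : ℝ) := by
      have : (0 : ℚ) < harmonic n := harmonic_pos (by omega)
      exact_mod_cast this.le
    rw [harmonic_succ]
    push_cast
    generalize (harmonic n : ℝ) = h at *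
    have hn0 : (n : ℝ) ≠ 0 := by linarith
    have hn1 : (n : ℝ) + 1 ≠ 0 := by linarith
    constructor
    · have e1 : (1 + 1 / (n : ℝ)) * (n * h) = (n + 1) * h := by field_simp
      have e2 : ((n : ℝ) + 1) * (h + (n + 1 : ℝ)⁻¹) = (n + 1) * h + 1 := by field_simp
      have := mul_le_mul_of_nonneg_left ih2 (by positivity : (0 : ℝ) ≤ 1 + 1 / n)
      rw [e2]; linarith
    · have e1 : (1 + 2 / (n : ℝ)) * (4 * n ^ 2 * h ^ 2) = 4 * (n ^ 2 + 2 * n) * h ^ 2 := by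
        field_simp
      have e2 : 4 * ((n : ℝ) + 1) ^ 2 * (h + (n + 1 : ℝ)⁻¹) ^ 2
          = 4 * ((n + 1) * h + 1) ^ 2 := by field_simp
      have := mul_le_mul_of_nonneg_left ih4 (by positivity : (0 : ℝ) ≤ 1 + 2 / n)
      rw [e2]; nlinarith [sq_nonneg h]

lemma X_moment_le_four [IsProbabilityMeasure P] (E : ERW G d p Ω P) (hd : 3 ≤ d) (hp0 : 0 ≤ p)
    (hpd : p ≤ ((d : ℝ) + 1) / (2 * d)) {n : ℕ} (hn : 1 ≤ n) {a : G} (ha : a ∈ E.S)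
    {m m' : ℝ} (hm : 2 < m') (hm4 : m' ≤ 4) (hmm : m' ≤ m) :
    ∫ ω, |E.X a n ω| ^ m ∂P ≤ 5 * ((harmonic n : ℝ) / n) ^ (m' / 2) := by
  have hn' : (1 : ℝ) ≤ n := by exact_mod_cast hn
  have hn0 : (n : ℝ) ≠ 0 := by linarith
  have hh0 : (0 : ℝ) < (harmonic n : ℝ) := by
    have : (0 : ℚ) < harmonic n := harmonic_pos (by omega)
    exact_mod_cast this
  set t : ℝ := (harmonic n : ℝ) / n with ht
  have htpos : 0 < t := by positivity
  have hXZ : ∀ ω, E.X a n ω = E.Z a n ω / n := fun ω => by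
    unfold X Z; field_simp
  have h4 : ∫ ω, E.X a n ω ^ 4 ∂P ≤ 4 * t ^ 2 := by
    have := (E.moments hd hp0 hpd hn ha).2
    simp_rw [hXZ, div_pow]
    rw [integral_div, div_le_iff₀ (by positivity)]
    refine this.trans (le_of_eq ?_)
    rw [ht]; field_simp
  have i4 : Integrable (fun ω => E.X a n ω ^ 4) P :=
    E.integrable_fn a n (fun c _ => ((c : ℝ) / n - 1 / d) ^ 4)
  have im : Integrable (fun ω => |E.X a n ω| ^ m) P :=
    E.integrable_fn a n (fun c _ => |(c : ℝ) / n - 1 / d| ^ m)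
  have hpt : ∀ ω, |E.X a n ω| ^ m ≤ t ^ (m' / 2) + t ^ (m' / 2 - 2) * E.X a n ω ^ 4 := by
    intro ω
    have hx1 := E.abs_X_le hd a n ω
    rw [← Even.pow_abs (by decide : Even 4)]
    have hx0 := abs_nonneg (E.X a n ω)
    generalize |E.X a n ω| = x at hx0 hx1
    have hA : x ^ m ≤ x ^ m' := by
      rcases hx0.eq_or_lt with h | h
      · rw [← h, Real.zero_rpow (by linarith), Real.zero_rpow (by linarith)]
      · exact Real.rpow_le_rpow_of_exponent_ge h hx1 hmm
    refine hA.trans ?_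
    have hxx : x ^ m' = (x ^ 2) ^ (m' / 2) := by
      rw [← Real.rpow_natCast x 2, ← Real.rpow_mul hx0]; congr 1; push_cast; ring
    rcases le_or_gt (x ^ 2) t with h | h
    · have : (x ^ 2) ^ (m' / 2) ≤ t ^ (m' / 2) :=
        Real.rpow_le_rpow (by positivity) h (by linarith)
      have h0 : 0 ≤ t ^ (m' / 2 - 2) * x ^ 4 := by positivity
      rw [hxx]; linarith
    · have hx2 : 0 < x ^ 2 := htpos.trans h
      have hxne : x ≠ 0 := fun h0 => by simp [h0] at hx2
      have h1 : (x ^ 2) ^ (m' / 2) = (x ^ 2) ^ (m' / 2 - 2) * x ^ 4 := by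
        rw [Real.rpow_sub hx2, show (2 : ℝ) = ((2 : ℕ) : ℝ) by norm_num, Real.rpow_natCast]
        field_simp
      have h2 : (x ^ 2) ^ (m' / 2 - 2) ≤ t ^ (m' / 2 - 2) :=
        Real.rpow_le_rpow_of_nonpos htpos h.le (by linarith)
      rw [hxx, h1]
      have h3 : (x ^ 2) ^ (m' / 2 - 2) * x ^ 4 ≤ t ^ (m' / 2 - 2) * x ^ 4 := by gcongr
      have h5 : 0 ≤ t ^ (m' / 2) := by positivity
      linarith
  have h5 := integral_mono im ((integrable_const _).add (i4.const_mul _)) hpt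
  simp only [Pi.add_apply] at h5
  rw [integral_add (integrable_const _) (i4.const_mul _), integral_const_mul] at h5
  simp only [integral_const, probReal_univ, smul_eq_mul, one_mul] at h5
  have h6 : t ^ (m' / 2 - 2) * ∫ ω, E.X a n ω ^ 4 ∂P ≤ t ^ (m' / 2 - 2) * (4 * t ^ 2) := by
    gcongr
  have h7 : t ^ (m' / 2 - 2) * (4 * t ^ 2) = 4 * t ^ (m' / 2) := by
    have : t ^ (m' / 2 - 2) * t ^ 2 = t ^ (m' / 2) := by
      rw [← Real.rpow_natCast t 2, ← Real.rpow_add htpos]; congr 1; push_cast; ring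
    rw [← this]; ring
  linarith

end ERW

lemma summable_harmonic_div {q : ℝ} (hq : 1 < q) :
    Summable fun n : ℕ => ((harmonic n : ℝ) / n) ^ q := by
  set ε : ℝ := (q - 1) / (2 * q) with hε
  have hε0 : 0 < ε := by rw [hε]; apply div_pos <;> linarith
  have hs : Summable fun n : ℕ => (1 + 1 / ε) ^ q * (n : ℝ) ^ (-((q + 1) / 2)) :=
    (Real.summable_nat_rpow.2 (by linarith)).mul_left _
  refine Summable.of_nonneg_of_le (fun n => ?_) (fun n => ?_) hs
  · have : (0 : ℝ) ≤ (harmonic n : ℝ) := by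
      have : (0 : ℚ) ≤ harmonic n := by unfold harmonic; positivity
      exact_mod_cast this
    positivity
  · rcases Nat.eq_zero_or_pos n with rfl | hn
    · simp [Real.zero_rpow (by linarith : q ≠ 0)]
      positivity
    have hn' : (1 : ℝ) ≤ n := by exact_mod_cast hn
    have hh0 : (0 : ℝ) ≤ (harmonic n : ℝ) := by
      have : (0 : ℚ) ≤ harmonic n := by unfold harmonic; positivity
      exact_mod_cast this
    have h1 : (harmonic n : ℝ) ≤ (1 + 1 / ε) * (n : ℝ) ^ ε := by
      have a1 := harmonic_le_one_add_log n
      have a2 := Real.log_le_rpow_div (by linarith : (0 : ℝ) ≤ n) hε0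
      have a3 : (1 : ℝ) ≤ (n : ℝ) ^ ε := Real.one_le_rpow hn' hε0.le
      have a4 : (1 + 1 / ε) * (n : ℝ) ^ ε = (n : ℝ) ^ ε + (n : ℝ) ^ ε / ε := by ring
      linarith
    have h2 : (harmonic n : ℝ) / n ≤ (1 + 1 / ε) * (n : ℝ) ^ (ε - 1) := by
      rw [Real.rpow_sub_one (by linarith), ← mul_div_assoc]
      gcongr
    calc ((harmonic n : ℝ) / n) ^ q ≤ ((1 + 1 / ε) * (n : ℝ) ^ (ε - 1)) ^ q :=
          Real.rpow_le_rpow (by positivity) h2 (by linarith)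
      _ = (1 + 1 / ε) ^ q * (n : ℝ) ^ (-((q + 1) / 2)) := by
          rw [Real.mul_rpow (by positivity) (by positivity), ← Real.rpow_mul (by linarith)]
          congr 2
          rw [hε]; field_simp; ring

/-- higher moments of `Ξ n` at or below criticality: if
`p ≤ p_d = (d+1)/(2d)` and `m > 2` then `E|Ξ n|^m ≤ C / n` for all `n ≥ 1`. -/
theorem erw_Xi_high_moments_subcritical
    {G : Type*} [Group G] [DecidableEq G] {Ω : Type*} [MeasurableSpace Ω]
    {P : Measure Ω} [IsProbabilityMeasure P]
    (d : ℕ) (hd : 3 ≤ d) (p : ℝ) (hp0 : 0 ≤ p) (hp1 : p < 1)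
    (hpd : p ≤ ((d : ℝ) + 1) / (2 * d))
    (E : ERW G d p Ω P) (m : ℝ) (hm : 2 < m) :
    ∃ C : ℝ, 0 < C ∧ ∀ n : ℕ, 1 ≤ n →
      ∫ ω, |E.Xi n ω| ^ m ∂P ≤ C / n := by
  set m' : ℝ := min m 4 with hm'
  have hm2 : 2 < m' := lt_min hm (by norm_num)
  set c : ℕ → ℝ := fun k => 5 * ((harmonic k : ℝ) / k) ^ (m' / 2) + if k = 0 then 1 else 0 with hc
  have hsum : Summable c :=
    ((summable_harmonic_div (by linarith : 1 < m' / 2)).mul_left 5).add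
      (hasSum_ite_eq 0 (1 : ℝ)).summable
  have hharm : ∀ k : ℕ, (0 : ℝ) ≤ (harmonic k : ℝ) := fun k => by
    have : (0 : ℚ) ≤ harmonic k := by unfold harmonic; positivity
    exact_mod_cast this
  have hc0 : ∀ k, 0 ≤ c k := fun k => by
    have := hharm k
    simp only [hc]
    split_ifs <;> positivity
  have him : ∀ k a, Integrable (fun ω => |E.X a k ω| ^ m) P := fun k a =>
    E.integrable_fn a k (fun c _ => |(c : ℝ) / k - 1 / d| ^ m)
  have hX : ∀ k, ∀ a ∈ E.S, ∫ ω, |E.X a k ω| ^ m ∂P ≤ c k := by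
    intro k a ha
    rcases Nat.eq_zero_or_pos k with rfl | hk
    · have h1 : ∫ ω, |E.X a 0 ω| ^ m ∂P ≤ ∫ ω, (1 : ℝ) ∂P :=
        integral_mono (him 0 a) (integrable_const _) fun ω =>
          Real.rpow_le_one (abs_nonneg _) (E.abs_X_le hd a 0 ω) (by linarith)
      simp only [integral_const, probReal_univ, smul_eq_mul, mul_one] at h1
      have h2 : (0 : ℝ) ≤ 5 * ((harmonic 0 : ℝ) / (0 : ℕ)) ^ (m' / 2) := by
        have := hharm 0
        positivity
      simp only [hc, if_true]
      linarith
    · have := E.X_moment_le_four hd hp0 hpd hk ha hm2 (min_le_right _ _) (min_le_left m 4)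
      simp only [hc, hk.ne', if_false, add_zero]
      exact this
  refine ⟨d * (∑' k, c k) + 1, ?_, fun n hn => ?_⟩
  · have : 0 ≤ ∑' k, c k := tsum_nonneg hc0
    positivity
  · have hn' : (0 : ℝ) < n := by exact_mod_cast hn
    have h1 : ∫ ω, |E.Xi n ω| ^ m ∂P ≤
        ∫ ω, (1 / n) * ∑ k ∈ Finset.range n, ∑ a ∈ E.S, |E.X a k ω| ^ m ∂P := by
      refine integral_mono_of_nonneg (Eventually.of_forall fun ω => by positivity) ?_
        (Eventually.of_forall fun ω => E.Xi_le n hn ω (by linarith))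
      exact (integrable_finsetSum _ fun k _ => integrable_finsetSum _ fun a _ =>
        him k a).const_mul _
    refine h1.trans ?_
    rw [integral_const_mul, integral_finsetSum _ fun k _ => integrable_finsetSum _ fun a _ =>
        him k a]
    have h2 : ∑ k ∈ Finset.range n, ∫ ω, ∑ a ∈ E.S, |E.X a k ω| ^ m ∂P ≤
        ∑ k ∈ Finset.range n, d * c k := by
      refine Finset.sum_le_sum fun k _ => ?_
      rw [integral_finsetSum _ fun a _ => him k a]
      refine (Finset.sum_le_card_nsmul _ _ _ (hX k)).trans ?_
      rw [E.card_S, nsmul_eq_mul]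
    rw [← Finset.mul_sum] at h2
    have h3 : ∑ k ∈ Finset.range n, c k ≤ ∑' k, c k := hsum.sum_le_tsum _ fun k _ => hc0 k
    have h4 : (d : ℝ) * ∑ k ∈ Finset.range n, c k ≤ d * ∑' k, c k := by gcongr
    rw [one_div_mul_eq_div]
    gcongr
    linarith

end
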